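/- Entropic lower bound on quantum guesswork via Holevo information: the quantum guesswork satisfies G(ρ, p) ≥ 2^{H(p) − χ(ρ,p)} / e + 1/2, where H(p) is the Shannon entropy of the prior in bits, χ(ρ,p) is the Holevo information of the ensemble in bits, and e is Euler's number. -/

import Mathlib

open Matrix BigOperators Finset ComplexOrder

noncomputable section

/-- A POVM indexed by a finite type `Y` in dimension `d`. -/
def IsPOVM {d : ℕ} {Y : Type*} [Fintype Y] (E : Y → Matrix (Fin d) (Fin d) ℂ) : Prop :=
  (∀ y, (E y).PosSemidef) ∧ ∑ y, E y = 1

/-- Guesswork of the strategy (POVM) `E` indexed by permutations: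
`Ĝ(ρ,p;E) = ∑_σ ∑_t t · p(σ(t)) · Re Tr(E_σ ρ_{σ(t)})`. -/
def Ghat {d n : ℕ} (ρ : Fin n → Matrix (Fin d) (Fin d) ℂ) (p : Fin n → ℝ)
    (E : Equiv.Perm (Fin n) → Matrix (Fin d) (Fin d) ℂ) : ℝ :=
  ∑ σ : Equiv.Perm (Fin n), ∑ t : Fin n,
    ((t.val : ℝ) + 1) * p (σ t) * ((E σ * ρ (σ t)).trace.re)

/-- The quantum guesswork: infimum of `Ĝ` over all POVMs indexed by `S_n`. -/
def QGuesswork {d n : ℕ} (ρ : Fin n → Matrix (Fin d) (Fin d) ℂ) (p : Fin n → ℝ) : ℝ :=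
  ⨅ E : {E : Equiv.Perm (Fin n) → Matrix (Fin d) (Fin d) ℂ // IsPOVM E}, Ghat ρ p E.1

/-- The optimally ordered classical guesswork of a POVM indexed by a finite type `Y`. -/
def Gopt {d n : ℕ} (ρ : Fin n → Matrix (Fin d) (Fin d) ℂ) (p : Fin n → ℝ)
    {Y : Type*} [Fintype Y] (E : Y → Matrix (Fin d) (Fin d) ℂ) : ℝ :=
  ∑ y : Y, ⨅ τ : Equiv.Perm (Fin n),
    ∑ i : Fin n, (((τ i).val : ℝ) + 1) * p i * ((E y * ρ i).trace.re)

/-- `𝓔_σ = ∑_t (2t - n - 1) p(σ(t)) ρ_{σ(t)}`. -/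
def calE {d n : ℕ} (ρ : Fin n → Matrix (Fin d) (Fin d) ℂ) (p : Fin n → ℝ)
    (σ : Equiv.Perm (Fin n)) : Matrix (Fin d) (Fin d) ℂ :=
  ∑ t : Fin n, ((2 * ((t.val : ℝ) + 1) - n - 1) * p (σ t)) • ρ (σ t)

/-- Functional calculus `f(A)` of a real function on a Hermitian matrix
(junk value `0` if `A` is not Hermitian). -/
def herApply {d : ℕ} (f : ℝ → ℝ) (A : Matrix (Fin d) (Fin d) ℂ) :
    Matrix (Fin d) (Fin d) ℂ :=
  if hA : A.IsHermitian then
    (hA.eigenvectorUnitary : Matrix (Fin d) (Fin d) ℂ) *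
      Matrix.diagonal (fun i => (f (hA.eigenvalues i) : ℂ)) *
      star (hA.eigenvectorUnitary : Matrix (Fin d) (Fin d) ℂ)
  else 0

/-- `|A|`, the absolute value of a Hermitian matrix. -/
def matAbs {d : ℕ} (A : Matrix (Fin d) (Fin d) ℂ) : Matrix (Fin d) (Fin d) ℂ :=
  herApply (fun x => |x|) A

/-- Trace norm `‖A‖ = Re Tr |A|` of a Hermitian matrix. -/
def traceNorm {d : ℕ} (A : Matrix (Fin d) (Fin d) ℂ) : ℝ :=
  (matAbs A).trace.re

/-- The reversed permutation `σ̄(t) = σ(n+1-t)`. -/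
def permBar {n : ℕ} (σ : Equiv.Perm (Fin n)) : Equiv.Perm (Fin n) :=
  σ * Fin.revPerm

/-- `g(λ) = 1` for `λ < 0`, `1/2` for `λ = 0`, `0` for `λ > 0`. -/
def gNeg : ℝ → ℝ := fun x => if x < 0 then 1 else if x = 0 then 1 / 2 else 0

/-- Dall'Arno's POVM `E^{σ*}`. -/
def povmStar {d n : ℕ} (ρ : Fin n → Matrix (Fin d) (Fin d) ℂ) (p : Fin n → ℝ)
    (σs : Equiv.Perm (Fin n)) : Equiv.Perm (Fin n) → Matrix (Fin d) (Fin d) ℂ :=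
  fun σ => if σ = σs ∨ σ = permBar σs then herApply gNeg (calE ρ p σ) else 0



/-- Shannon entropy in bits. -/
def shannonH {n : ℕ} (p : Fin n → ℝ) : ℝ := -∑ x, p x * Real.logb 2 (p x)

/-- Von Neumann entropy in bits (junk value `0` for non-Hermitian matrices). -/
def vonNeumann {d : ℕ} (A : Matrix (Fin d) (Fin d) ℂ) : ℝ :=
  if hA : A.IsHermitian then -∑ i, hA.eigenvalues i * Real.logb 2 (hA.eigenvalues i) else 0

/-- Holevo information of the ensemble, in bits. -/
def holevoInfo {d n : ℕ} (ρ : Fin n → Matrix (Fin d) (Fin d) ℂ) (p : Fin n → ℝ) : ℝ :=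
  vonNeumann (∑ x, p x • ρ x) - ∑ x, p x * vonNeumann (ρ x)

/-!
A measurement cannot increase relative entropy. The classical `D(P‖Q)` is an integral over `t > 0`
of `∑ P² / (Q + t P)`, up to terms depending only on `∑ P`, and the quantum `D(A‖B)` equals the
classical relative entropy of the Nussbaum–Szkoła weights of `(A, B)`. So it suffices to compare
these sums for each `t`. Each of them is the maximum of a concave quadratic, over functions `x` of
the outcome and over matrices `X` respectively; inserting `X = ∑ x y • E y` and using
`(∑ x y • E y)² ≤ ∑ (x y)² • E y` gives the comparison.

Hence the entropy of the label conditioned on the outcome of a measurement is at least `H(p) - χ`.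
An outcome that is a permutation ranks the labels, and Gibbs' inequality against the weights
`exp (-(k + 1/2) / m) / m` on the ranks `k = 0, 1, …`, where `m + 1/2` is the expected number of
guesses, bounds the same conditional entropy, in nats, by `1 + log m`.
-/

section ClassicalRelativeEntropy

variable {κ ι : Type*} [Fintype κ] [Fintype ι]

/-- The relative entropy `D(P‖Q)`, in nats, of two finite families of weights. Because
`Real.log 0 = 0`, it carries its usual meaning only if `P` vanishes wherever `Q` does. -/
def relEntropy (P Q : κ → ℝ) : ℝ := ∑ k, P k * (Real.log (P k) - Real.log (Q k))

lemma sub_le_mul_log_sub_log {a b : ℝ} (ha : 0 ≤ a) (hb : 0 ≤ b) (hab : b = 0 → a = 0) :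
    a - b ≤ a * (Real.log a - Real.log b) := by
  rcases ha.eq_or_lt with rfl | ha
  · simpa using hb
  · have hb : 0 < b := hb.lt_of_ne fun h => ha.ne' (hab h.symm)
    have hlog : Real.log (b / a) ≤ b / a - 1 := Real.log_le_sub_one_of_pos (by positivity)
    calc a - b = -(a * (b / a - 1)) := by field_simp; ring
      _ ≤ -(a * Real.log (b / a)) := by gcongr
      _ = a * (Real.log a - Real.log b) := by rw [Real.log_div hb.ne' ha.ne']; ring

lemma relEntropy_nonneg {P Q : κ → ℝ} (hP : ∀ k, 0 ≤ P k) (hQ : ∀ k, 0 ≤ Q k)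
    (hPQ : ∀ k, Q k = 0 → P k = 0) (hsum : ∑ k, Q k ≤ ∑ k, P k) : 0 ≤ relEntropy P Q :=
  calc 0 ≤ ∑ k, (P k - Q k) := by rw [sum_sub_distrib]; linarith
    _ ≤ relEntropy P Q := sum_le_sum fun k _ => sub_le_mul_log_sub_log (hP k) (hQ k) (hPQ k)

lemma hasDerivAt_relEntropy_add_smul {P Q : κ → ℝ} (hP : ∀ k, 0 ≤ P k) (hQ : ∀ k, 0 ≤ Q k)
    (hPQ : ∀ k, Q k = 0 → P k = 0) {t : ℝ} (ht : 0 ≤ t) :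
    HasDerivAt (fun t : ℝ => relEntropy P (Q + t • P))
      (-∑ k, P k ^ 2 / (Q k + t * P k)) t := by
  rw [← sum_neg_distrib]
  refine HasDerivAt.fun_sum fun k _ => ?_
  rcases (hP k).eq_or_lt with hk | hk
  · simpa [← hk] using hasDerivAt_const t (0 : ℝ)
  · have hQk : 0 < Q k := (hQ k).lt_of_ne fun h => hk.ne' (hPQ k h.symm)
    have hlin : HasDerivAt (fun t : ℝ => Q k + t * P k) (P k) t := by
      simpa using ((hasDerivAt_id t).mul_const (P k)).const_add (Q k)
    have hpos : Q k + t * P k ≠ 0 := by positivity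
    refine (((hlin.log hpos).const_sub (Real.log (P k))).const_mul (P k)).congr_deriv ?_
    ring

lemma tendsto_relEntropy_add_smul_atTop {P Q : κ → ℝ} (hP : ∀ k, 0 ≤ P k) (hQ : ∀ k, 0 ≤ Q k) :
    Filter.Tendsto (fun t : ℝ => relEntropy P (Q + t • P) + (∑ k, P k) * Real.log t)
      Filter.atTop (nhds 0) := by
  have hterm (k : κ) : Filter.Tendsto
      (fun t : ℝ => P k * (Real.log (P k) - Real.log (Q k / t + P k))) Filter.atTop (nhds 0) := by
    rcases (hP k).eq_or_lt with hk | hk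
    · simp [← hk]
    · have harg : Filter.Tendsto (fun t : ℝ => Q k / t + P k) Filter.atTop (nhds (P k)) := by
        simpa using (tendsto_const_nhds.div_atTop Filter.tendsto_id).add_const (P k)
      simpa using ((harg.log hk.ne').const_sub (Real.log (P k))).const_mul (P k)
  have hsum := tendsto_finsetSum univ fun k _ => hterm k
  rw [sum_const_zero] at hsum
  refine hsum.congr' ?_
  filter_upwards [Filter.eventually_gt_atTop 0] with t ht
  rw [relEntropy, sum_mul, ← sum_add_distrib]
  refine sum_congr rfl fun k _ => ?_
  rcases (hP k).eq_or_lt with hk | hk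
  · simp [← hk]
  · have hpos : 0 < Q k + t * P k := add_pos_of_nonneg_of_pos (hQ k) (by positivity)
    have hdiv : Q k / t + P k = (Q k + t * P k) / t := by field_simp
    simp only [Pi.add_apply, Pi.smul_apply, smul_eq_mul]
    rw [hdiv, Real.log_div hpos.ne' ht.ne']
    ring

-- By the two previous lemmas, `D(P‖Q) = ∫₀^∞ (∑ P² / (Q + t P) - (∑ P) / (1 + t)) dt`, so a
-- pointwise comparison of integrands suffices.
theorem relEntropy_le_relEntropy_of_sum_sq_div_le {P Q : κ → ℝ} {P' Q' : ι → ℝ}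
    (hP : ∀ k, 0 ≤ P k) (hQ : ∀ k, 0 ≤ Q k) (hPQ : ∀ k, Q k = 0 → P k = 0)
    (hP' : ∀ i, 0 ≤ P' i) (hQ' : ∀ i, 0 ≤ Q' i) (hPQ' : ∀ i, Q' i = 0 → P' i = 0)
    (hsum : ∑ k, P k = ∑ i, P' i)
    (hle : ∀ t : ℝ, 0 < t →
      ∑ k, P k ^ 2 / (Q k + t * P k) ≤ ∑ i, P' i ^ 2 / (Q' i + t * P' i)) :
    relEntropy P Q ≤ relEntropy P' Q' := by
  let gap (t : ℝ) : ℝ := relEntropy P' (Q' + t • P') - relEntropy P (Q + t • P)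
  have hderiv {t : ℝ} (ht : 0 ≤ t) := (hasDerivAt_relEntropy_add_smul hP' hQ' hPQ' ht).fun_sub
    (hasDerivAt_relEntropy_add_smul hP hQ hPQ ht)
  have hanti : AntitoneOn gap (Set.Ici 0) := by
    refine antitoneOn_of_deriv_nonpos (convex_Ici 0)
      (fun t ht => (hderiv ht).continuousAt.continuousWithinAt) (fun t ht => ?_) (fun t ht => ?_)
    · exact (hderiv (interior_subset ht)).differentiableAt.differentiableWithinAt
    · rw [(hderiv (interior_subset ht)).deriv]
      linarith [hle t (by simpa using ht)]
  have hlim : Filter.Tendsto gap Filter.atTop (nhds 0) := by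
    have h := (tendsto_relEntropy_add_smul_atTop hP' hQ').sub
      (tendsto_relEntropy_add_smul_atTop hP hQ)
    simpa only [hsum, add_sub_add_right_eq_sub, sub_zero] using h
  have hgap : 0 ≤ gap 0 := le_of_tendsto hlim <| by
    filter_upwards [Filter.eventually_ge_atTop 0] with t ht
    exact hanti Set.self_mem_Ici ht ht
  simpa [gap] using hgap

end ClassicalRelativeEntropy

section PositiveSemidefinite

variable {𝕜 n Y : Type*} [RCLike 𝕜] [Fintype n] {A B : Matrix n n 𝕜}

open scoped MatrixOrder in
lemma exists_eq_conjTranspose_mul_self (hA : A.PosSemidef) : ∃ C : Matrix n n 𝕜, A = Cᴴ * C := by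
  classical exact CStarAlgebra.nonneg_iff_eq_star_mul_self.mp hA.nonneg

lemma re_trace_mul_nonneg (hA : A.PosSemidef) (hB : B.PosSemidef) :
    0 ≤ RCLike.re (A * B).trace := by
  obtain ⟨C, rfl⟩ := exists_eq_conjTranspose_mul_self hA
  rw [Matrix.mul_assoc, trace_mul_comm]
  exact (RCLike.nonneg_iff.mp (hB.mul_mul_conjTranspose_same C).trace_nonneg).1

lemma re_trace_mul_eq_zero_of_ker_le {E : Matrix n n 𝕜} (hE : E.PosSemidef) (hB : B.PosSemidef)
    (hker : ∀ v, B *ᵥ v = 0 → A *ᵥ v = 0) (htr : RCLike.re (E * B).trace = 0) :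
    RCLike.re (E * A).trace = 0 := by
  classical
  obtain ⟨C, rfl⟩ := exists_eq_conjTranspose_mul_self hE
  rw [Matrix.mul_assoc, trace_mul_comm] at htr ⊢
  have hpos := hB.mul_mul_conjTranspose_same C
  have hCB : C * B * Cᴴ = 0 := hpos.trace_eq_zero_iff.mp <|
    RCLike.ext (by simpa using htr) (by simpa using (RCLike.nonneg_iff.mp hpos.trace_nonneg).2)
  have hBC (v : n → 𝕜) : B *ᵥ (Cᴴ *ᵥ v) = 0 := by
    rw [← hB.dotProduct_mulVec_zero_iff, star_mulVec, conjTranspose_conjTranspose,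
      ← dotProduct_mulVec, mulVec_mulVec, mulVec_mulVec, hCB, zero_mulVec, dotProduct_zero]
  have hAC : A * Cᴴ = 0 := Matrix.ext_of_mulVec_single fun i => by
    rw [← mulVec_mulVec, hker _ (hBC _), zero_mulVec]
  rw [Matrix.mul_assoc, hAC, Matrix.mul_zero, trace_zero, map_zero]

lemma mulVec_eq_zero_of_sum_mulVec_eq_zero {s : Finset Y} {F : Y → Matrix n n 𝕜}
    (hF : ∀ y, (F y).PosSemidef) {v : n → 𝕜} (hv : (∑ y ∈ s, F y) *ᵥ v = 0) {y : Y}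
    (hy : y ∈ s) : F y *ᵥ v = 0 := by
  have hsum : ∑ y ∈ s, star v ⬝ᵥ (F y *ᵥ v) = 0 := by
    rw [← dotProduct_sum, ← sum_mulVec, hv, dotProduct_zero]
  rw [← (hF y).dotProduct_mulVec_zero_iff]
  exact (sum_eq_zero_iff_of_nonneg fun y _ => (hF y).dotProduct_mulVec_nonneg v).mp hsum y hy

end PositiveSemidefinite

section QuantumRelativeEntropy

variable {𝕜 n : Type*} [RCLike 𝕜] [Fintype n] [DecidableEq n] {A B : Matrix n n 𝕜}

/-- Umegaki's relative entropy `D(A‖B) = Tr A (log A - log B)`, in nats, of two Hermitian matrices.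
Because `Real.log 0 = 0`, it carries its usual meaning only if `ker B ⊆ ker A`. -/
def quantumRelEntropy (A B : Matrix n n 𝕜) : ℝ :=
  RCLike.re (A * (cfc Real.log A - cfc Real.log B)).trace

/-- The matrix of `X` with respect to the eigenbasis of `B` (columns) and that of `A` (rows). -/
def eigenbasisMatrix (hA : A.IsHermitian) (hB : B.IsHermitian) (X : Matrix n n 𝕜) :
    Matrix n n 𝕜 :=
  star (hA.eigenvectorUnitary : Matrix n n 𝕜) * X * hB.eigenvectorUnitary

/-- First Nussbaum–Szkoła weights of the pair `(A, B)`: `|⟨uᵢ, vⱼ⟩|² aᵢ` at `(i, j)`, for the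
spectral decompositions `A = ∑ aᵢ |uᵢ⟩⟨uᵢ|` and `B = ∑ bⱼ |vⱼ⟩⟨vⱼ|`. -/
def nussbaumSzkolaFst (hA : A.IsHermitian) (hB : B.IsHermitian) (k : n × n) : ℝ :=
  ‖eigenbasisMatrix hA hB 1 k.1 k.2‖ ^ 2 * hA.eigenvalues k.1

/-- Second Nussbaum–Szkoła weights of the pair `(A, B)`: `|⟨uᵢ, vⱼ⟩|² bⱼ` at `(i, j)`. -/
def nussbaumSzkolaSnd (hA : A.IsHermitian) (hB : B.IsHermitian) (k : n × n) : ℝ :=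
  ‖eigenbasisMatrix hA hB 1 k.1 k.2‖ ^ 2 * hB.eigenvalues k.2

lemma cfc_eq_eigenvectorUnitary_mul (hA : A.IsHermitian) (f : ℝ → ℝ) :
    cfc f A = (hA.eigenvectorUnitary : Matrix n n 𝕜) *
      diagonal (fun i => (f (hA.eigenvalues i) : 𝕜)) *
        star (hA.eigenvectorUnitary : Matrix n n 𝕜) := by
  rw [hA.cfc_eq, Matrix.IsHermitian.cfc, Unitary.conjStarAlgAut_apply]
  rfl

lemma trace_cfc_mul_mul_cfc_mul_conjTranspose (hA : A.IsHermitian) (hB : B.IsHermitian)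
    (f g : ℝ → ℝ) (X Z : Matrix n n 𝕜) :
    (cfc f A * X * cfc g B * Zᴴ).trace = ∑ k : n × n,
      ((f (hA.eigenvalues k.1) * g (hB.eigenvalues k.2) : ℝ) : 𝕜) *
        (eigenbasisMatrix hA hB X k.1 k.2 * star (eigenbasisMatrix hA hB Z k.1 k.2)) := by
  have hcycle : (cfc f A * X * cfc g B * Zᴴ).trace =
      (diagonal (fun i => (f (hA.eigenvalues i) : 𝕜)) * (eigenbasisMatrix hA hB X *
        diagonal (fun j => (g (hB.eigenvalues j) : 𝕜)) * (eigenbasisMatrix hA hB Z)ᴴ)).trace := by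
    simp only [cfc_eq_eigenvectorUnitary_mul hA, cfc_eq_eigenvectorUnitary_mul hB,
      eigenbasisMatrix, conjTranspose_mul, star_eq_conjTranspose, conjTranspose_conjTranspose,
      Matrix.mul_assoc]
    rw [trace_mul_comm]
    simp only [Matrix.mul_assoc]
  rw [hcycle, trace, Fintype.sum_prod_type]
  refine sum_congr rfl fun i _ => ?_
  rw [diag_apply, diagonal_mul, mul_apply, mul_sum]
  refine sum_congr rfl fun j _ => ?_
  rw [mul_diagonal, conjTranspose_apply, RCLike.ofReal_mul]
  ring

lemma re_trace_cfc_mul_mul_cfc_mul_conjTranspose_self (hA : A.IsHermitian) (hB : B.IsHermitian)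
    (f g : ℝ → ℝ) (X : Matrix n n 𝕜) :
    RCLike.re (cfc f A * X * cfc g B * Xᴴ).trace = ∑ k : n × n,
      f (hA.eigenvalues k.1) * g (hB.eigenvalues k.2) * ‖eigenbasisMatrix hA hB X k.1 k.2‖ ^ 2 := by
  rw [trace_cfc_mul_mul_cfc_mul_conjTranspose hA hB, map_sum]
  refine sum_congr rfl fun k _ => ?_
  rw [RCLike.re_ofReal_mul, RCLike.star_def, RCLike.mul_conj, ← RCLike.ofReal_pow,
    RCLike.ofReal_re]

lemma re_trace_cfc_mul_cfc (hA : A.IsHermitian) (hB : B.IsHermitian) (f g : ℝ → ℝ) :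
    RCLike.re (cfc f A * cfc g B).trace = ∑ k : n × n, f (hA.eigenvalues k.1) *
      g (hB.eigenvalues k.2) * ‖eigenbasisMatrix hA hB 1 k.1 k.2‖ ^ 2 := by
  simpa using re_trace_cfc_mul_mul_cfc_mul_conjTranspose_self hA hB f g 1

lemma re_trace_cfc (hA : A.IsHermitian) (f : ℝ → ℝ) :
    RCLike.re (cfc f A).trace = ∑ i, f (hA.eigenvalues i) := by
  rw [cfc_eq_eigenvectorUnitary_mul hA, trace_mul_comm, ← Matrix.mul_assoc,
    Unitary.coe_star_mul_self, Matrix.one_mul, trace_diagonal, map_sum]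
  simp only [RCLike.ofReal_re]

lemma mul_cfc_log (hA : A.IsHermitian) : A * cfc Real.log A = cfc (fun x => x * Real.log x) A := by
  have hcont (f : ℝ → ℝ) : ContinuousOn f (spectrum ℝ A) := A.finite_real_spectrum.continuousOn f
  calc A * cfc Real.log A = cfc id A * cfc Real.log A := by rw [cfc_id ℝ A hA.isSelfAdjoint]
    _ = cfc (fun x => x * Real.log x) A := (cfc_mul id Real.log A (hcont _) (hcont _)).symm

lemma eigenvalues_mul_eigenbasisMatrix_one (hA : A.IsHermitian) (hB : B.IsHermitian) (i j : n) :
    (hA.eigenvalues i : 𝕜) * eigenbasisMatrix hA hB 1 i j = eigenbasisMatrix hA hB A i j := by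
  have hdiag : star (hA.eigenvectorUnitary : Matrix n n 𝕜) * A =
      diagonal (fun i => (hA.eigenvalues i : 𝕜)) * star (hA.eigenvectorUnitary : Matrix n n 𝕜) := by
    have hspec := cfc_eq_eigenvectorUnitary_mul hA id
    rw [cfc_id ℝ A hA.isSelfAdjoint] at hspec
    refine (congrArg (star (hA.eigenvectorUnitary : Matrix n n 𝕜) * ·) hspec).trans ?_
    simp only [← Matrix.mul_assoc, Unitary.coe_star_mul_self, Matrix.one_mul, id_eq]
  rw [eigenbasisMatrix, eigenbasisMatrix, Matrix.mul_one, hdiag, Matrix.mul_assoc, diagonal_mul]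

lemma eigenbasisMatrix_eq_zero_of_eigenvalues_eq_zero (hA : A.IsHermitian) (hB : B.IsHermitian)
    (hker : ∀ v, B *ᵥ v = 0 → A *ᵥ v = 0) {j : n} (hj : hB.eigenvalues j = 0) (i : n) :
    eigenbasisMatrix hA hB A i j = 0 := by
  have hBj : B *ᵥ hB.eigenvectorBasis j = 0 := by
    rw [hB.mulVec_eigenvectorBasis, hj, zero_smul]
  have hcol : eigenbasisMatrix hA hB A *ᵥ Pi.single j 1 = 0 := by
    rw [eigenbasisMatrix, ← mulVec_mulVec, hB.eigenvectorUnitary_mulVec, ← mulVec_mulVec,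
      hker _ hBj, mulVec_zero]
  simpa using congrFun hcol i

lemma nussbaumSzkolaFst_nonneg (hA : A.PosSemidef) (hB : B.IsHermitian) (k : n × n) :
    0 ≤ nussbaumSzkolaFst hA.isHermitian hB k :=
  mul_nonneg (sq_nonneg _) (hA.eigenvalues_nonneg _)

lemma nussbaumSzkolaSnd_nonneg (hA : A.IsHermitian) (hB : B.PosSemidef) (k : n × n) :
    0 ≤ nussbaumSzkolaSnd hA hB.isHermitian k :=
  mul_nonneg (sq_nonneg _) (hB.eigenvalues_nonneg _)

lemma nussbaumSzkolaFst_eq_zero (hA : A.IsHermitian) (hB : B.IsHermitian)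
    (hker : ∀ v, B *ᵥ v = 0 → A *ᵥ v = 0) {k : n × n} (hk : nussbaumSzkolaSnd hA hB k = 0) :
    nussbaumSzkolaFst hA hB k = 0 := by
  rcases mul_eq_zero.mp hk with hoverlap | hj
  · rw [nussbaumSzkolaFst, hoverlap, zero_mul]
  · have hmul := eigenvalues_mul_eigenbasisMatrix_one hA hB k.1 k.2
    rw [eigenbasisMatrix_eq_zero_of_eigenvalues_eq_zero hA hB hker hj, mul_eq_zero,
      RCLike.ofReal_eq_zero] at hmul
    rcases hmul with hi | hoverlap
    · rw [nussbaumSzkolaFst, hi, mul_zero]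
    · rw [nussbaumSzkolaFst, hoverlap, norm_zero, sq, zero_mul, zero_mul]

lemma sum_nussbaumSzkolaFst (hA : A.IsHermitian) (hB : B.IsHermitian) :
    ∑ k, nussbaumSzkolaFst hA hB k = RCLike.re A.trace := by
  have htrace := re_trace_cfc_mul_cfc hA hB id 1
  rw [cfc_id ℝ A hA.isSelfAdjoint, cfc_one ℝ B hB.isSelfAdjoint, Matrix.mul_one] at htrace
  rw [htrace]
  exact sum_congr rfl fun k _ => by simp [nussbaumSzkolaFst, mul_comm]

theorem relEntropy_nussbaumSzkola (hA : A.IsHermitian) (hB : B.IsHermitian)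
    (hker : ∀ v, B *ᵥ v = 0 → A *ᵥ v = 0) :
    relEntropy (nussbaumSzkolaFst hA hB) (nussbaumSzkolaSnd hA hB) = quantumRelEntropy A B := by
  have hself := re_trace_cfc_mul_cfc hA hB (fun x => x * Real.log x) 1
  have hcross := re_trace_cfc_mul_cfc hA hB id Real.log
  rw [cfc_one ℝ B hB.isSelfAdjoint, Matrix.mul_one, ← mul_cfc_log hA] at hself
  rw [cfc_id ℝ A hA.isSelfAdjoint] at hcross
  rw [quantumRelEntropy, mul_sub, trace_sub, map_sub, hself, hcross, ← sum_sub_distrib]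
  refine sum_congr rfl fun k _ => ?_
  have hzero := nussbaumSzkolaFst_eq_zero hA hB hker (k := k)
  rcases eq_or_ne (nussbaumSzkolaFst hA hB k) 0 with hk | hk
  · rcases mul_eq_zero.mp hk with h | h <;> simp [hk, h]
  · have hfst := mul_ne_zero_iff.mp hk
    have hsnd := mul_ne_zero_iff.mp (mt hzero hk)
    rw [nussbaumSzkolaFst, nussbaumSzkolaSnd, Real.log_mul hfst.1 hfst.2,
      Real.log_mul hsnd.1 hsnd.2]
    simp only [Pi.one_apply, id_eq]
    ring

-- Completing the square: `c ‖z‖² - 2 a Re (z * star w) + a² ‖w‖² / c ≥ 0`.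
lemma two_mul_re_mul_star_sub_le (z w : 𝕜) {a c : ℝ} (ha : 0 ≤ a) (hc : 0 ≤ c)
    (hac : c = 0 → a = 0) :
    2 * (a * RCLike.re (z * star w)) - c * ‖z‖ ^ 2 ≤
      (‖w‖ ^ 2 * a) ^ 2 / (‖w‖ ^ 2 * c) := by
  have hre : RCLike.re (z * star w) ≤ ‖z‖ * ‖w‖ := by
    simpa using RCLike.re_le_norm (z * star w)
  rcases hc.eq_or_lt with rfl | hc
  · simp [hac rfl]
  rcases eq_or_ne ‖w‖ 0 with hw | hw
  · simpa [norm_eq_zero.mp hw] using mul_nonneg hc.le (sq_nonneg ‖z‖)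
  · calc 2 * (a * RCLike.re (z * star w)) - c * ‖z‖ ^ 2
        ≤ 2 * (a * (‖z‖ * ‖w‖)) - c * ‖z‖ ^ 2 := by gcongr
      _ = (‖w‖ ^ 2 * a) ^ 2 / (‖w‖ ^ 2 * c) - (c * ‖z‖ - a * ‖w‖) ^ 2 / c := by
        field_simp [hw]; ring
      _ ≤ (‖w‖ ^ 2 * a) ^ 2 / (‖w‖ ^ 2 * c) := sub_le_self _ (by positivity)

theorem two_mul_re_trace_sub_le_sum_nussbaumSzkola (hA : A.PosSemidef) (hB : B.PosSemidef) {t : ℝ}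
    (ht : 0 < t) (X : Matrix n n 𝕜) :
    2 * RCLike.re (A * X).trace - RCLike.re (X * B * Xᴴ).trace
        - t * RCLike.re (A * X * Xᴴ).trace ≤
      ∑ k, nussbaumSzkolaFst hA.isHermitian hB.isHermitian k ^ 2 /
        (nussbaumSzkolaSnd hA.isHermitian hB.isHermitian k +
          t * nussbaumSzkolaFst hA.isHermitian hB.isHermitian k) := by
  have hA' := hA.isHermitian
  have hB' := hB.isHermitian
  let M := eigenbasisMatrix hA' hB' X
  let K := eigenbasisMatrix hA' hB' 1
  have hlin : RCLike.re (A * X).trace =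
      ∑ k : n × n, hA'.eigenvalues k.1 * RCLike.re (M k.1 k.2 * star (K k.1 k.2)) := by
    have h := congrArg RCLike.re (trace_cfc_mul_mul_cfc_mul_conjTranspose hA' hB' id 1 X 1)
    simpa [cfc_id ℝ A hA'.isSelfAdjoint, cfc_one ℝ B hB'.isSelfAdjoint] using h
  have hquadB : RCLike.re (X * B * Xᴴ).trace =
      ∑ k : n × n, hB'.eigenvalues k.2 * ‖M k.1 k.2‖ ^ 2 := by
    have h := re_trace_cfc_mul_mul_cfc_mul_conjTranspose_self hA' hB' 1 id X
    simpa [cfc_id ℝ B hB'.isSelfAdjoint, cfc_one ℝ A hA'.isSelfAdjoint] using h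
  have hquadA : RCLike.re (A * X * Xᴴ).trace =
      ∑ k : n × n, hA'.eigenvalues k.1 * ‖M k.1 k.2‖ ^ 2 := by
    have h := re_trace_cfc_mul_mul_cfc_mul_conjTranspose_self hA' hB' id 1 X
    simpa [cfc_id ℝ A hA'.isSelfAdjoint, cfc_one ℝ B hB'.isSelfAdjoint] using h
  rw [hlin, hquadB, hquadA, mul_sum, mul_sum, ← sum_sub_distrib, ← sum_sub_distrib]
  refine sum_le_sum fun k _ => ?_
  have ha : 0 ≤ hA'.eigenvalues k.1 := hA.eigenvalues_nonneg _
  have hb : 0 ≤ hB'.eigenvalues k.2 := hB.eigenvalues_nonneg _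
  have hterm := two_mul_re_mul_star_sub_le (M k.1 k.2) (K k.1 k.2) ha
    (c := hB'.eigenvalues k.2 + t * hA'.eigenvalues k.1) (by positivity) (fun h => by nlinarith)
  refine le_of_eq_of_le (by ring) (hterm.trans_eq ?_)
  simp only [nussbaumSzkolaFst, nussbaumSzkolaSnd, K]
  ring

end QuantumRelativeEntropy

section Measurement

variable {𝕜 n Y : Type*} [RCLike 𝕜] [Fintype n] {E : Y → Matrix n n 𝕜}
  {A B : Matrix n n 𝕜}

/-- The weights `Re Tr (E y A)` of the outcomes `y` when `A` is measured with effects `E`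
(the Born rule). -/
def bornWeight (E : Y → Matrix n n 𝕜) (A : Matrix n n 𝕜) (y : Y) : ℝ := RCLike.re (E y * A).trace

lemma bornWeight_nonneg (hE : ∀ y, (E y).PosSemidef) (hA : A.PosSemidef) (y : Y) :
    0 ≤ bornWeight E A y :=
  re_trace_mul_nonneg (hE y) hA

lemma bornWeight_eq_zero (hE : ∀ y, (E y).PosSemidef) (hB : B.PosSemidef)
    (hker : ∀ v, B *ᵥ v = 0 → A *ᵥ v = 0) {y : Y} (hy : bornWeight E B y = 0) :
    bornWeight E A y = 0 :=
  re_trace_mul_eq_zero_of_ker_le (hE y) hB hker hy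

variable [Fintype Y]

lemma sum_mul_bornWeight (x : Y → ℝ) (A : Matrix n n 𝕜) :
    ∑ y, x y * bornWeight E A y = RCLike.re ((∑ y, x y • E y) * A).trace := by
  simp only [bornWeight, sum_mul, trace_sum, map_sum, smul_mul_assoc, trace_smul, RCLike.smul_re]

lemma sum_bornWeight [DecidableEq n] (hE : ∑ y, E y = 1) (A : Matrix n n 𝕜) :
    ∑ y, bornWeight E A y = RCLike.re A.trace := by
  simpa [hE] using sum_mul_bornWeight (E := E) 1 A

lemma posSemidef_sum_sq_smul_sub_sq [DecidableEq n] (hE : ∀ y, (E y).PosSemidef)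
    (hE1 : ∑ y, E y = 1) (x : Y → ℝ) :
    (∑ y, x y ^ 2 • E y - (∑ y, x y • E y) * ∑ y, x y • E y).PosSemidef := by
  set X := ∑ y, x y • E y with hX
  have hXh : Xᴴ = X := by
    simp only [hX, conjTranspose_sum, conjTranspose_smul, star_trivial, (hE _).isHermitian.eq]
  have hexpand (y : Y) : (x y • 1 - X) * E y * (x y • 1 - X)ᴴ =
      x y ^ 2 • E y - X * (x y • E y) - (x y • E y) * X + X * E y * X := by
    simp only [conjTranspose_sub, conjTranspose_smul, conjTranspose_one, hXh, star_trivial, sub_mul,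
      mul_sub, smul_mul_assoc, mul_smul_comm, Matrix.one_mul, Matrix.mul_one, smul_sub, smul_smul,
      sq]
    abel
  have hsum : ∑ y, x y ^ 2 • E y - X * X = ∑ y, (x y • 1 - X) * E y * (x y • 1 - X)ᴴ := by
    simp only [hexpand, sum_add_distrib, sum_sub_distrib, ← mul_sum, ← sum_mul, ← hX, hE1,
      Matrix.mul_one, sub_add_cancel]
  rw [hsum]
  exact posSemidef_sum _ fun y _ => (hE y).mul_mul_conjTranspose_same _

lemma re_trace_sum_smul_sq_mul_le [DecidableEq n] (hE : ∀ y, (E y).PosSemidef)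
    (hE1 : ∑ y, E y = 1) (hA : A.PosSemidef) (x : Y → ℝ) :
    RCLike.re ((∑ y, x y • E y) * (∑ y, x y • E y) * A).trace ≤
      ∑ y, x y ^ 2 * bornWeight E A y := by
  have hnonneg := re_trace_mul_nonneg (posSemidef_sum_sq_smul_sub_sq hE hE1 x) hA
  rw [sub_mul, trace_sub, map_sub, ← sum_mul_bornWeight] at hnonneg
  linarith

theorem sum_bornWeight_sq_div_le_sum_nussbaumSzkola [DecidableEq n]
    (hE : ∀ y, (E y).PosSemidef) (hE1 : ∑ y, E y = 1) (hA : A.PosSemidef) (hB : B.PosSemidef)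
    {t : ℝ} (ht : 0 < t) :
    ∑ y, bornWeight E A y ^ 2 / (bornWeight E B y + t * bornWeight E A y) ≤
      ∑ k, nussbaumSzkolaFst hA.isHermitian hB.isHermitian k ^ 2 /
        (nussbaumSzkolaSnd hA.isHermitian hB.isHermitian k +
          t * nussbaumSzkolaFst hA.isHermitian hB.isHermitian k) := by
  let P := bornWeight E A
  let Q := bornWeight E B
  -- The maximiser of `x ↦ 2 x P - x² (Q + t P)`, for each outcome.
  let x (y : Y) : ℝ := P y / (Q y + t * P y)
  let X := ∑ y, x y • E y
  have hXh : Xᴴ = X := by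
    simp only [X, conjTranspose_sum, conjTranspose_smul, star_trivial, (hE _).isHermitian.eq]
  have hmax (y : Y) : P y ^ 2 / (Q y + t * P y) =
      2 * (x y * P y) - x y ^ 2 * Q y - t * (x y ^ 2 * P y) := by
    rcases eq_or_ne (Q y + t * P y) 0 with hy | hy
    · simp [x, hy]
    · have hx : x y * (Q y + t * P y) = P y := div_mul_cancel₀ _ hy
      have hsq : P y ^ 2 / (Q y + t * P y) = x y * P y := by rw [sq, mul_div_right_comm]
      rw [hsq]
      linear_combination x y * hx
  have hA2 : RCLike.re (A * X * Xᴴ).trace ≤ ∑ y, x y ^ 2 * P y := by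
    rw [hXh, Matrix.mul_assoc, trace_mul_comm]
    exact re_trace_sum_smul_sq_mul_le hE hE1 hA x
  have hB2 : RCLike.re (X * B * Xᴴ).trace ≤ ∑ y, x y ^ 2 * Q y := by
    rw [hXh, trace_mul_comm, ← Matrix.mul_assoc]
    exact re_trace_sum_smul_sq_mul_le hE hE1 hB x
  calc ∑ y, P y ^ 2 / (Q y + t * P y)
      = 2 * RCLike.re (A * X).trace - ∑ y, x y ^ 2 * Q y - t * ∑ y, x y ^ 2 * P y := by
        rw [sum_congr rfl fun y _ => hmax y, sum_sub_distrib, sum_sub_distrib, ← mul_sum,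
          ← mul_sum, sum_mul_bornWeight, trace_mul_comm]
    _ ≤ 2 * RCLike.re (A * X).trace - RCLike.re (X * B * Xᴴ).trace
          - t * RCLike.re (A * X * Xᴴ).trace := by gcongr
    _ ≤ _ := two_mul_re_trace_sub_le_sum_nussbaumSzkola hA hB ht X

theorem relEntropy_bornWeight_le_quantumRelEntropy [DecidableEq n] (hE : ∀ y, (E y).PosSemidef)
    (hE1 : ∑ y, E y = 1) (hA : A.PosSemidef) (hB : B.PosSemidef)
    (hker : ∀ v, B *ᵥ v = 0 → A *ᵥ v = 0) :
    relEntropy (bornWeight E A) (bornWeight E B) ≤ quantumRelEntropy A B := by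
  rw [← relEntropy_nussbaumSzkola hA.isHermitian hB.isHermitian hker]
  exact relEntropy_le_relEntropy_of_sum_sq_div_le
    (bornWeight_nonneg hE hA) (bornWeight_nonneg hE hB) (fun _ => bornWeight_eq_zero hE hB hker)
    (nussbaumSzkolaFst_nonneg hA hB.isHermitian) (nussbaumSzkolaSnd_nonneg hA.isHermitian hB)
    (fun _ => nussbaumSzkolaFst_eq_zero hA.isHermitian hB.isHermitian hker)
    (by rw [sum_bornWeight hE1, sum_nussbaumSzkolaFst])
    fun _ ht => sum_bornWeight_sq_div_le_sum_nussbaumSzkola hE hE1 hA hB ht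

theorem sum_mul_relEntropy_bornWeight_le [DecidableEq n] {X : Type*} [Fintype X]
    {ρ : X → Matrix n n 𝕜} {p : X → ℝ} (hE : ∀ y, (E y).PosSemidef) (hE1 : ∑ y, E y = 1)
    (hρ : ∀ x, (ρ x).PosSemidef) (hp : ∀ x, 0 ≤ p x) :
    ∑ x, p x * relEntropy (bornWeight E (ρ x)) (bornWeight E (∑ x, p x • ρ x)) ≤
      ∑ x, p x * quantumRelEntropy (ρ x) (∑ x, p x • ρ x) := by
  have hpρ (x : X) : (p x • ρ x).PosSemidef := (hρ x).smul (hp x)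
  refine sum_le_sum fun x _ => ?_
  rcases eq_or_ne (p x) 0 with hx | hx
  · simp [hx]
  · refine mul_le_mul_of_nonneg_left (relEntropy_bornWeight_le_quantumRelEntropy hE hE1 (hρ x)
      (posSemidef_sum _ fun x _ => hpρ x) fun v hv => ?_) (hp x)
    have hsmul := mulVec_eq_zero_of_sum_mulVec_eq_zero hpρ hv (mem_univ x)
    rw [smul_mulVec] at hsmul
    exact (smul_eq_zero.mp hsmul).resolve_left hx

end Measurement

section ConditionalEntropy

variable {X Y : Type*} [Fintype X] [Fintype Y]

/-- The conditional entropy `H(X|Y)`, in nats, of the joint weights `J y x`. -/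
def condEntropy (J : Y → X → ℝ) : ℝ :=
  ∑ y, ∑ x, J y x * (Real.log (∑ x', J y x') - Real.log (J y x))

lemma condEntropy_mul {p : X → ℝ} {T : X → Y → ℝ} (hT : ∀ x, ∑ y, T x y = 1) :
    condEntropy (fun y x => p x * T x y) =
      -∑ x, p x * Real.log (p x) - ∑ x, p x * relEntropy (T x) (fun y => ∑ x', p x' * T x' y) := by
  rw [condEntropy, sum_comm, ← sum_neg_distrib, ← sum_sub_distrib]
  refine sum_congr rfl fun x _ => ?_
  have hsplit : p x * Real.log (p x) = ∑ y, p x * T x y * Real.log (p x) := by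
    rw [← sum_mul, ← mul_sum, hT, mul_one]
  rw [hsplit, relEntropy, mul_sum, ← sum_neg_distrib, ← sum_sub_distrib]
  refine sum_congr rfl fun y _ => ?_
  rcases eq_or_ne (p x) 0 with hp | hp
  · simp [hp]
  rcases eq_or_ne (T x y) 0 with hTxy | hTxy
  · simp [hTxy]
  rw [Real.log_mul hp hTxy]
  ring

-- Since `sinh x ≥ x`, each summand is at most `exp (-k/m) - exp (-(k+1)/m)`.
lemma sum_exp_neg_add_half_div_le_one (s : Finset ℕ) {m : ℝ} (hm : 0 < m) :
    ∑ k ∈ s, Real.exp (-((k : ℝ) + 1 / 2) / m) / m ≤ 1 := by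
  have hterm (k : ℕ) : Real.exp (-((k : ℝ) + 1 / 2) / m) / m ≤
      Real.exp (-(k : ℝ) / m) - Real.exp (-((k + 1 : ℕ) : ℝ) / m) := by
    have hsinh : 1 / (2 * m) ≤ Real.sinh (1 / (2 * m)) :=
      Real.self_le_sinh_iff.mpr (by positivity)
    have hleft : -(k : ℝ) / m = -((k : ℝ) + 1 / 2) / m + 1 / (2 * m) := by field_simp; ring
    have hright : -((k + 1 : ℕ) : ℝ) / m = -((k : ℝ) + 1 / 2) / m + -(1 / (2 * m)) := by
      push_cast; field_simp; ring
    calc Real.exp (-((k : ℝ) + 1 / 2) / m) / m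
        = Real.exp (-((k : ℝ) + 1 / 2) / m) * (2 * (1 / (2 * m))) := by field_simp
      _ ≤ Real.exp (-((k : ℝ) + 1 / 2) / m) * (2 * Real.sinh (1 / (2 * m))) := by gcongr
      _ = _ := by rw [hleft, hright, Real.exp_add, Real.exp_add, Real.sinh_eq]; ring
  obtain ⟨N, hN⟩ := s.exists_nat_subset_range
  calc ∑ k ∈ s, Real.exp (-((k : ℝ) + 1 / 2) / m) / m
      ≤ ∑ k ∈ range N, Real.exp (-((k : ℝ) + 1 / 2) / m) / m :=
        sum_le_sum_of_subset_of_nonneg hN fun _ _ _ => by positivity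
    _ ≤ ∑ k ∈ range N, (Real.exp (-(k : ℝ) / m) - Real.exp (-((k + 1 : ℕ) : ℝ) / m)) :=
        sum_le_sum fun k _ => hterm k
    _ = 1 - Real.exp (-(N : ℝ) / m) := by
        rw [sum_range_sub' (fun k : ℕ => Real.exp (-(k : ℝ) / m))]
        simp
    _ ≤ 1 := sub_le_self _ (Real.exp_pos _).le

-- Gibbs' inequality against the nearly geometric weights `exp (-(k + 1/2)/m) / m` on the ranks `k`.
theorem condEntropy_le_one_add_log {J : Y → X → ℝ} (hJ : ∀ y x, 0 ≤ J y x)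
    (hJ1 : ∑ y, ∑ x, J y x = 1) {r : Y → X → ℕ} (hr : ∀ y, Function.Injective (r y))
    {m : ℝ} (hm : 0 < m) (hJm : ∑ y, ∑ x, ((r y x : ℝ) + 1 / 2) * J y x = m) :
    condEntropy J ≤ 1 + Real.log m := by
  let R (y : Y) (x : X) : ℝ := Real.exp (-((r y x : ℝ) + 1 / 2) / m) / m
  let Q (y : Y) : ℝ := ∑ x, J y x
  have hR (y : Y) (x : X) : 0 < R y x := by positivity
  have hQ (y : Y) : 0 ≤ Q y := sum_nonneg fun x _ => hJ y x
  have hJQ (y : Y) (x : X) (h : Q y = 0) : J y x = 0 :=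
    (sum_eq_zero_iff_of_nonneg fun x _ => hJ y x).mp h x (mem_univ x)
  have hR1 (y : Y) : ∑ x, R y x ≤ 1 := by
    have h := sum_exp_neg_add_half_div_le_one (univ.map ⟨r y, hr y⟩) hm
    rwa [sum_map] at h
  have hmass : ∑ k : Y × X, Q k.1 * R k.1 k.2 ≤ ∑ k : Y × X, J k.1 k.2 := by
    rw [Fintype.sum_prod_type, Fintype.sum_prod_type]
    refine sum_le_sum fun y _ => ?_
    simpa only [← mul_sum] using mul_le_of_le_one_right (hQ y) (hR1 y)
  have hgibbs := relEntropy_nonneg (P := fun k : Y × X => J k.1 k.2)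
    (Q := fun k => Q k.1 * R k.1 k.2) (fun k => hJ k.1 k.2)
    (fun k => mul_nonneg (hQ k.1) (hR k.1 k.2).le)
    (fun k h => hJQ k.1 k.2 ((mul_eq_zero.mp h).resolve_right (hR k.1 k.2).ne')) hmass
  have hterm (y : Y) (x : X) : J y x * (Real.log (J y x) - Real.log (Q y * R y x)) =
      ((r y x : ℝ) + 1 / 2) * J y x / m + J y x * Real.log m
        - J y x * (Real.log (Q y) - Real.log (J y x)) := by
    rcases eq_or_ne (J y x) 0 with h | h
    · simp [h]
    · rw [Real.log_mul (mt (hJQ y x) h) (hR y x).ne', Real.log_div (Real.exp_pos _).ne' hm.ne',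
        Real.log_exp]
      ring
  have hsum : relEntropy (fun k : Y × X => J k.1 k.2) (fun k => Q k.1 * R k.1 k.2) =
      1 + Real.log m - condEntropy J := by
    simp only [relEntropy, Fintype.sum_prod_type, hterm, sum_sub_distrib, sum_add_distrib,
      ← sum_div, ← sum_mul, hJ1, hJm, div_self hm.ne', one_mul, condEntropy, Q]
  linarith

theorem exp_condEntropy_div_add_half_le {J : Y → X → ℝ} (hJ : ∀ y x, 0 ≤ J y x)
    (hJ1 : ∑ y, ∑ x, J y x = 1) {r : Y → X → ℕ} (hr : ∀ y, Function.Injective (r y)) :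
    Real.exp (condEntropy J) / Real.exp 1 + 1 / 2 ≤ ∑ y, ∑ x, ((r y x : ℝ) + 1) * J y x := by
  set m := ∑ y, ∑ x, ((r y x : ℝ) + 1 / 2) * J y x with hm
  have hshift (c : ℝ) : ∑ y, ∑ x, ((r y x : ℝ) + c) * J y x =
      ∑ y, ∑ x, (r y x : ℝ) * J y x + c := by
    simp only [add_mul, sum_add_distrib, ← mul_sum, hJ1, mul_one]
  have hguess : ∑ y, ∑ x, ((r y x : ℝ) + 1) * J y x = m + 1 / 2 := by
    rw [hm, hshift, hshift]; ring
  have hmpos : 0 < m := by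
    have hrank : 0 ≤ ∑ y, ∑ x, (r y x : ℝ) * J y x :=
      sum_nonneg fun y _ => sum_nonneg fun x _ => mul_nonneg (Nat.cast_nonneg _) (hJ y x)
    rw [hm, hshift]
    positivity
  have hexp : Real.exp (condEntropy J) ≤ m * Real.exp 1 :=
    calc Real.exp (condEntropy J) ≤ Real.exp (1 + Real.log m) :=
          Real.exp_le_exp.mpr (condEntropy_le_one_add_log hJ hJ1 hr hmpos rfl)
      _ = m * Real.exp 1 := by rw [Real.exp_add, Real.exp_log hmpos, mul_comm]
  rw [hguess]
  gcongr
  exact (div_le_iff₀ (Real.exp_pos 1)).mpr hexp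

end ConditionalEntropy

section Guesswork

variable {d n : ℕ} {ρ : Fin n → Matrix (Fin d) (Fin d) ℂ} {p : Fin n → ℝ}

lemma log_two_mul_shannonH (p : Fin n → ℝ) :
    Real.log 2 * shannonH p = -∑ x, p x * Real.log (p x) := by
  rw [shannonH, mul_neg, mul_sum]
  congr! 2 with x
  rw [Real.logb, mul_left_comm, mul_div_cancel₀ _ (Real.log_pos one_lt_two).ne']

lemma log_two_mul_vonNeumann {A : Matrix (Fin d) (Fin d) ℂ} (hA : A.IsHermitian) :
    Real.log 2 * vonNeumann A = -RCLike.re (A * cfc Real.log A).trace := by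
  rw [mul_cfc_log hA, re_trace_cfc hA, ← log_two_mul_shannonH, shannonH, vonNeumann, dif_pos hA]

lemma log_two_mul_holevoInfo (hρ : ∀ x, (ρ x).IsHermitian) :
    Real.log 2 * holevoInfo ρ p = ∑ x, p x * quantumRelEntropy (ρ x) (∑ x, p x • ρ x) := by
  set σ := ∑ x, p x • ρ x with hσ
  have hσh : σ.IsHermitian := by
    simp only [hσ, IsHermitian, conjTranspose_sum, conjTranspose_smul, star_trivial, (hρ _).eq]
  have hcross : RCLike.re (σ * cfc Real.log σ).trace =
      ∑ x, p x * RCLike.re (ρ x * cfc Real.log σ).trace :=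
    (sum_mul_bornWeight p _).symm
  rw [holevoInfo, mul_sub, mul_sum, log_two_mul_vonNeumann hσh, hcross]
  simp only [mul_left_comm (Real.log 2), log_two_mul_vonNeumann (hρ _), quantumRelEntropy, mul_sub,
    trace_sub, map_sub, sum_sub_distrib, mul_neg, sum_neg_distrib]
  ring

lemma Ghat_eq_sum_symm (ρ : Fin n → Matrix (Fin d) (Fin d) ℂ) (p : Fin n → ℝ)
    (E : Equiv.Perm (Fin n) → Matrix (Fin d) (Fin d) ℂ) :
    Ghat ρ p E = ∑ τ : Equiv.Perm (Fin n), ∑ x,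
      (((τ.symm x : ℕ) : ℝ) + 1) * (p x * bornWeight E (ρ x) τ) := by
  refine sum_congr rfl fun τ _ => ?_
  rw [← Equiv.sum_comp τ fun x => (((τ.symm x : ℕ) : ℝ) + 1) * (p x * bornWeight E (ρ x) τ)]
  refine sum_congr rfl fun t _ => ?_
  rw [Equiv.symm_apply_apply, mul_assoc]
  rfl

lemma nonempty_povm {Y : Type*} [Fintype Y] [Nonempty Y] :
    Nonempty {E : Y → Matrix (Fin d) (Fin d) ℂ // IsPOVM E} := by
  classical
  refine ⟨Pi.single (Classical.arbitrary Y) 1, fun y => ?_, by simp⟩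
  rw [Pi.single_apply]
  split_ifs
  exacts [.one, .zero]

theorem two_rpow_shannonH_sub_holevoInfo_le_exp_condEntropy {Y : Type*} [Fintype Y]
    {E : Y → Matrix (Fin d) (Fin d) ℂ} (hE : IsPOVM E) (hρ : ∀ x, (ρ x).PosSemidef)
    (hρtr : ∀ x, (ρ x).trace = 1) (hp : ∀ x, 0 ≤ p x) :
    (2 : ℝ) ^ (shannonH p - holevoInfo ρ p) ≤
      Real.exp (condEntropy fun y x => p x * bornWeight E (ρ x) y) := by
  have hprob (x : Fin n) : ∑ y, bornWeight E (ρ x) y = 1 := by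
    rw [sum_bornWeight hE.2, hρtr, RCLike.one_re]
  have hmix : bornWeight E (∑ x, p x • ρ x) = fun y => ∑ x, p x * bornWeight E (ρ x) y := by
    funext y
    simp only [bornWeight, mul_sum, trace_sum, map_sum, mul_smul_comm, trace_smul, RCLike.smul_re]
  rw [Real.rpow_def_of_pos two_pos, Real.exp_le_exp, mul_sub, log_two_mul_shannonH,
    log_two_mul_holevoInfo fun x => (hρ x).isHermitian, condEntropy_mul hprob, ← hmix]
  exact sub_le_sub_left (sum_mul_relEntropy_bornWeight_le hE.1 hE.2 hρ hp) _

end Guesswork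

/-- entropic lower bound on quantum guesswork via Holevo information. -/
theorem quantum_guesswork_entropic_lower_bound {d n : ℕ}
    (ρ : Fin n → Matrix (Fin d) (Fin d) ℂ) (p : Fin n → ℝ)
    (hρ : ∀ x, (ρ x).PosSemidef) (hρtr : ∀ x, (ρ x).trace = 1)
    (hp : ∀ x, 0 ≤ p x) (hpsum : ∑ x, p x = 1) :
    (2 : ℝ) ^ (shannonH p - holevoInfo ρ p) / Real.exp 1 + 1 / 2 ≤ QGuesswork ρ p := by
  have : Nonempty {E : Equiv.Perm (Fin n) → Matrix (Fin d) (Fin d) ℂ // IsPOVM E} :=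
    nonempty_povm
  refine le_ciInf fun ⟨E, hE⟩ => ?_
  let J (τ : Equiv.Perm (Fin n)) (x : Fin n) : ℝ := p x * bornWeight E (ρ x) τ
  have hJ (τ : Equiv.Perm (Fin n)) (x : Fin n) : 0 ≤ J τ x :=
    mul_nonneg (hp x) (bornWeight_nonneg hE.1 (hρ x) τ)
  have hJ1 : ∑ τ, ∑ x, J τ x = 1 := by
    rw [sum_comm]
    simp only [J, ← mul_sum, sum_bornWeight hE.2, hρtr, RCLike.one_re, mul_one, hpsum]
  have hrank (τ : Equiv.Perm (Fin n)) : Function.Injective fun x => (τ.symm x : ℕ) :=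
    Fin.val_injective.comp τ.symm.injective
  calc (2 : ℝ) ^ (shannonH p - holevoInfo ρ p) / Real.exp 1 + 1 / 2
      ≤ Real.exp (condEntropy J) / Real.exp 1 + 1 / 2 := by
        gcongr
        exact two_rpow_shannonH_sub_holevoInfo_le_exp_condEntropy hE hρ hρtr hp
    _ ≤ ∑ τ, ∑ x, (((τ.symm x : ℕ) : ℝ) + 1) * J τ x :=
        exp_condEntropy_div_add_half_le hJ hJ1 hrank
    _ = Ghat ρ p E := (Ghat_eq_sum_symm ρ p E).symm

end
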